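/- arXiv:1811.03496 — 7 statements merged into one kernel-verified Lean document; each statement's English description precedes it below -/
import Mathlib

section
/- Let N ≥ 1 and consider the affinity dynamics of a single task over N agents with a greedy (max-affinity) assignment sequence σ. Then for every cycle k ≥ N − 1, the affinity pressure is zero: AP k = 0. -/
/-- Affinity dynamics of a single task over `N` agents with assignment
sequence `σ`: initially all affinities are 1; the assigned agent's affinity
is reset to 1, every other agent's affinity is incremented. -/
def affinity {N : ℕ} (σ : ℕ → Fin N) : ℕ → Fin N → ℕ
  | 0, _ => 1
  | k + 1, i => if σ k = i then 1 else affinity σ k i + 1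

/-- Affinity pressure of the task at cycle `k`. -/
def AP {N : ℕ} (σ : ℕ → Fin N) (k : ℕ) : ℚ :=
  (∑ i : Fin N, (affinity σ k i : ℚ)) / N - (N + 1) / 2

/-- `σ` is greedy (max-affinity): at every cycle the assigned agent has
maximal affinity. -/
def Greedy {N : ℕ} (σ : ℕ → Fin N) : Prop :=
  ∀ k i, affinity σ k i ≤ affinity σ k (σ k)

theorem aff_pos {N : ℕ} (σ : ℕ → Fin N) (k : ℕ) (i : Fin N) : 1 ≤ affinity σ k i := by
  cases k with
  | zero => simp [affinity]
  | succ k => simp only [affinity]; split_ifs <;> omega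

theorem aff_le {N : ℕ} (σ : ℕ → Fin N) (k : ℕ) (i : Fin N) : affinity σ k i ≤ k + 1 := by
  induction k with
  | zero => simp [affinity]
  | succ k ih => simp only [affinity]; split_ifs <;> omega

theorem aff_dup {N : ℕ} (σ : ℕ → Fin N) (k : ℕ) (i j : Fin N) (hij : i ≠ j)
    (h : affinity σ k i = affinity σ k j) : affinity σ k i = k + 1 := by
  induction k with
  | zero => simp [affinity]
  | succ k ih =>
    have h1 := aff_pos σ k i
    have h2 := aff_pos σ k j
    simp only [affinity] at h ⊢
    split_ifs at h ⊢ with ha hb hb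
    · exact absurd (ha.symm.trans hb) hij
    · omega
    · omega
    · have := ih (by omega)
      omega

theorem aff_card {N : ℕ} (σ : ℕ → Fin N) (hσ : Greedy σ) (k : ℕ) (hk : k ≤ N) :
    (Finset.univ.filter (fun i => affinity σ k i = k + 1)).card = N - k := by
  induction k with
  | zero => simp [affinity]
  | succ k ih =>
    have ih := ih (by omega)
    have hne : (Finset.univ.filter (fun i => affinity σ k i = k + 1)).Nonempty := by
      rw [← Finset.card_pos]; omega
    obtain ⟨i, hi⟩ := hne
    have hi : affinity σ k i = k + 1 := by simpa using hi
    have hs : affinity σ k (σ k) = k + 1 := by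
      have := hσ k i
      have := aff_le σ k (σ k)
      omega
    have he : Finset.univ.filter (fun i => affinity σ (k+1) i = k + 1 + 1)
        = (Finset.univ.filter (fun i => affinity σ k i = k + 1)).erase (σ k) := by
      ext j
      simp only [Finset.mem_filter, Finset.mem_univ, true_and, Finset.mem_erase]
      simp only [affinity]
      by_cases hj : σ k = j
      · simp [hj]
      · simp [hj, Ne.symm hj]
    rw [he, Finset.card_erase_of_mem (by simp [hs]), ih]
    omega

theorem aff_inv {N : ℕ} (hN : 1 ≤ N) (σ : ℕ → Fin N) (hσ : Greedy σ) (k : ℕ) (hk : N - 1 ≤ k) :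
    Function.Injective (affinity σ k) ∧ ∀ i, affinity σ k i ≤ N := by
  induction k, hk using Nat.le_induction with
  | base =>
    refine ⟨fun i j h => ?_, fun i => ?_⟩
    · by_contra hij
      have h1 := aff_dup σ _ i j hij h
      have hc := aff_card σ hσ (N - 1) (by omega)
      have hc : (Finset.univ.filter (fun i => affinity σ (N-1) i = N - 1 + 1)).card ≤ 1 := by omega
      exact hij (Finset.card_le_one.mp hc i (by simp [h1]) j (by simp [← h, h1]))
    · have := aff_le σ (N-1) i
      omega
  | succ k hk ih =>
    obtain ⟨hinj, hle⟩ := ih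
    refine ⟨fun i j h => ?_, fun i => ?_⟩
    · have h1 := aff_pos σ k i
      have h2 := aff_pos σ k j
      simp only [affinity] at h
      split_ifs at h with ha hb hb
      · exact ha.symm.trans hb
      · omega
      · omega
      · exact hinj (by omega)
    · simp only [affinity]
      split_ifs with ha
      · exact hN
      · have h1 := hσ k i
        have h2 := hle (σ k)
        have h3 : affinity σ k i ≠ affinity σ k (σ k) := fun h => ha (hinj h).symm
        omega

theorem greedy_AP_eq_zero {N : ℕ} (hN : 1 ≤ N) (σ : ℕ → Fin N)
    (hσ : Greedy σ) : ∀ k, N - 1 ≤ k → AP σ k = 0 := by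
  intro k hk
  obtain ⟨hinj, hle⟩ := aff_inv hN σ hσ k hk
  have himg : Finset.univ.image (affinity σ k) = Finset.Icc 1 N := by
    apply Finset.eq_of_subset_of_card_le
    · intro x hx
      obtain ⟨i, -, rfl⟩ := Finset.mem_image.mp hx
      exact Finset.mem_Icc.mpr ⟨aff_pos σ k i, hle i⟩
    · rw [Finset.card_image_of_injective _ hinj]; simp
  have hsum : ∑ i : Fin N, (affinity σ k i : ℚ) = ∑ x ∈ Finset.Icc 1 N, (x : ℚ) := by
    rw [← himg, Finset.sum_image (fun a _ b _ h => hinj h)]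
  have hg : ∀ n : ℕ, ∑ x ∈ Finset.Icc 1 n, (x : ℚ) = n * (n + 1) / 2 := by
    intro n
    induction n with
    | zero => simp
    | succ n ih => rw [Finset.sum_Icc_succ_top (by omega), ih]; push_cast; ring
  have hN0 : (N : ℚ) ≠ 0 := by exact_mod_cast (by omega : N ≠ 0)
  unfold AP
  rw [hsum, hg]
  field_simp
  ring
end

section
/- Let N ≥ 1 and consider the affinity dynamics of a single task over N agents with a greedy (max-affinity) assignment sequence σ. Then σ never repeats an agent within any window of N consecutive cycles: for all cycles t < s with s < t + N, we have σ t ≠ σ s. -/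
/-- An agent assigned at cycle `t` has affinity at most `d + 1` at cycle `t + 1 + d`. -/
theorem affinity_le_of_assigned {N : ℕ} (σ : ℕ → Fin N) (t d : ℕ) :
    affinity σ (t + 1 + d) (σ t) ≤ d + 1 := by
  induction d with
  | zero => simp [affinity]
  | succ d ih =>
    rw [← add_assoc, affinity]
    split_ifs <;> omega

/-- An agent not assigned during `[t, t + d)` has affinity at least `d + 1` at cycle `t + d`. -/
theorem le_affinity_of_unassigned {N : ℕ} (σ : ℕ → Fin N) (t d : ℕ) (i : Fin N)
    (h : ∀ j < d, σ (t + j) ≠ i) : d + 1 ≤ affinity σ (t + d) i := by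
  induction d with
  | zero =>
    cases t with
    | zero => simp [affinity]
    | succ t =>
      simp only [add_zero, affinity]
      split_ifs <;> omega
  | succ d ih =>
    have h1 := ih (fun j hj => h j (by omega))
    rw [← add_assoc, affinity, if_neg (h d (by omega))]
    omega

theorem greedy_no_repeat_in_window {N : ℕ} (hN : 1 ≤ N) (σ : ℕ → Fin N)
    (hσ : Greedy σ) : ∀ t s, t < s → s < t + N → σ t ≠ σ s := by
  intro t s hts hsN heq
  obtain ⟨d, rfl⟩ : ∃ d, s = t + 1 + d := ⟨s - (t + 1), by omega⟩
  have hsurj : Function.Surjective (fun j : Fin (d + 1) => σ (t + j)) := by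
    intro i
    by_contra hne
    have h1 := le_affinity_of_unassigned σ t (d + 1) i
      (fun j hj hji => hne ⟨⟨j, hj⟩, hji⟩)
    have h2 := hσ (t + 1 + d) i
    rw [← heq] at h2
    have h3 := affinity_le_of_assigned σ t d
    rw [show t + (d + 1) = t + 1 + d by omega] at h1
    omega
  have hcard := Fintype.card_le_of_surjective _ hsurj
  simp only [Fintype.card_fin] at hcard
  omega
end

section
/- Consider the affinity dynamics of a single task over N agents (N ≥ 1) with an arbitrary assignment sequence σ. For every cycle k ≥ N − 1, the affinity pressure is nonnegative: AP k ≥ 0. -/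
theorem affinity_card_le {N : ℕ} (σ : ℕ → Fin N) :
    ∀ k m, m ≤ k → (Finset.univ.filter (fun i => affinity σ k i ≤ m)).card ≤ m := by
  intro k
  induction k with
  | zero =>
    intro m hm
    obtain rfl : m = 0 := by omega
    simp [affinity]
  | succ k ih =>
    intro m hm
    cases m with
    | zero =>
      rw [Nat.le_zero, Finset.card_eq_zero, Finset.filter_eq_empty_iff]
      intro i _ h
      simp only [affinity] at h
      split_ifs at h
      · omega
      · omega
    | succ m =>
      have hsub : Finset.univ.filter (fun i => affinity σ (k + 1) i ≤ m + 1) ⊆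
          insert (σ k) (Finset.univ.filter (fun i => affinity σ k i ≤ m)) := by
        intro i hi
        simp only [Finset.mem_filter, Finset.mem_univ, true_and, Finset.mem_insert] at hi ⊢
        simp only [affinity] at hi
        by_cases h : σ k = i
        · exact Or.inl h.symm
        · rw [if_neg h] at hi
          right; omega
      have h1 := Finset.card_le_card hsub
      have h2 := Finset.card_insert_le (σ k) (Finset.univ.filter (fun i => affinity σ k i ≤ m))
      have h3 := ih m (by omega)
      omega

theorem affinity_sum_ge {N : ℕ} (σ : ℕ → Fin N) (k : ℕ) (hk : N - 1 ≤ k) :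
    ∑ m ∈ Finset.range N, (N - m) ≤ ∑ i : Fin N, affinity σ k i := by
  calc ∑ m ∈ Finset.range N, (N - m)
      ≤ ∑ m ∈ Finset.range N, ∑ i : Fin N, (if m < affinity σ k i then 1 else 0) := by
        apply Finset.sum_le_sum
        intro m hm
        rw [Finset.mem_range] at hm
        rw [← Finset.card_filter]
        have h1 := affinity_card_le σ k m (by omega)
        have h2 := Finset.card_filter_add_card_filter_not (s := (Finset.univ : Finset (Fin N)))
          (fun i => affinity σ k i ≤ m)
        simp only [not_le, Finset.card_univ, Fintype.card_fin] at h2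
        omega
    _ = ∑ i : Fin N, ∑ m ∈ Finset.range N, (if m < affinity σ k i then 1 else 0) :=
        Finset.sum_comm
    _ ≤ ∑ i : Fin N, affinity σ k i := by
        apply Finset.sum_le_sum
        intro i _
        rw [← Finset.card_filter]
        calc _ ≤ (Finset.range (affinity σ k i)).card := by
              apply Finset.card_le_card
              intro m hm
              simp only [Finset.mem_filter, Finset.mem_range] at hm ⊢
              exact hm.2
          _ = _ := Finset.card_range _

theorem sum_sub_twice (N : ℕ) : 2 * ∑ m ∈ Finset.range N, (N - m) = N * (N + 1) := by
  induction N with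
  | zero => simp
  | succ n ih =>
    rw [Finset.sum_range_succ']
    simp only [Nat.add_sub_add_right, Nat.sub_zero]
    rw [mul_add, ih]; ring

theorem AP_nonneg {N : ℕ} (hN : 1 ≤ N) (σ : ℕ → Fin N) :
    ∀ k, N - 1 ≤ k → 0 ≤ AP σ k := by
  intro k hk
  have h1 := affinity_sum_ge σ k hk
  have h2 := sum_sub_twice N
  have h3 : N * (N + 1) ≤ 2 * ∑ i : Fin N, affinity σ k i := by omega
  have h4 : (N : ℚ) * (N + 1) ≤ 2 * ∑ i : Fin N, (affinity σ k i : ℚ) := by exact_mod_cast h3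
  have hpos : (0 : ℚ) < N := by exact_mod_cast hN
  unfold AP
  rw [sub_nonneg, le_div_iff₀ hpos]
  linarith
end

section
/- Let N ≥ 1, M ≥ 0 with N ≤ M + 1, and let f : Fin N → ℕ satisfy: 1 ≤ f i ≤ M + 1 for all i, and f is injective on the set of indices i with f i ≤ M (i.e., if f i = f j and f i ≤ M then i = j). Then ∑ i, f i ≥ N (N + 1) / 2. -/
theorem sum_ge_triangular {N M : ℕ} (hN : 1 ≤ N) (hNM : N ≤ M + 1)
    (f : Fin N → ℕ) (hlb : ∀ i, 1 ≤ f i) (hub : ∀ i, f i ≤ M + 1)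
    (hinj : ∀ i j, f i = f j → f i ≤ M → i = j) :
    N * (N + 1) / 2 ≤ ∑ i, f i := by
  have key : ∀ s : Finset (Fin N), s.card * (s.card + 1) ≤ 2 * ∑ i ∈ s, f i := by
    intro s
    induction s using Finset.induction_on_max_value f with
    | empty => simp
    | insert a s has hmax ih =>
      have hc : (insert a s).card ≤ f a := by
        by_cases hM : f a ≤ M
        · have hle : ∀ x ∈ insert a s, f x ≤ f a := by
            intro x hx
            rcases Finset.mem_insert.mp hx with rfl | hx
            · exact le_rfl
            · exact hmax x hx
          have h := Finset.card_le_card_of_injOn (s := insert a s)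
            (t := Finset.Icc 1 (f a)) f
            (fun x hx => Finset.mem_coe.mpr (Finset.mem_Icc.mpr ⟨hlb x, hle x hx⟩))
            (fun x hx y _ hxy => hinj x y hxy ((hle x hx).trans hM))
          simpa using h
        · have h := Finset.card_le_univ (insert a s)
          rw [Fintype.card_fin] at h
          omega
      rw [Finset.card_insert_of_notMem has] at hc ⊢
      rw [Finset.sum_insert has]
      nlinarith
  have h := key Finset.univ
  rw [Finset.card_univ, Fintype.card_fin] at h
  omega
end

section
/- Consider the affinity dynamics of a single task over N agents with the round-robin assignment sequence σ t = t mod N. If N ≥ 2, then for every cycle k with k < N − 1 the affinity pressure is strictly negative: AP k < 0. -/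
theorem affinity_of_unassigned {N : ℕ} (σ : ℕ → Fin N) (i : Fin N) :
    ∀ k, (∀ j, j < k → σ j ≠ i) → affinity σ k i = k + 1 := by
  intro k
  induction k with
  | zero => intro _; simp [affinity]
  | succ k ih =>
    intro h
    rw [affinity, if_neg (h k (by omega)), ih (fun j hj => h j (by omega))]

theorem affinity_sum_succ {N : ℕ} (σ : ℕ → Fin N) (k : ℕ) :
    (∑ i : Fin N, (affinity σ (k + 1) i : ℚ)) =
      (∑ i : Fin N, (affinity σ k i : ℚ)) + N - affinity σ k (σ k) := by
  have h : ∀ i : Fin N, (affinity σ (k + 1) i : ℚ) =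
      ((affinity σ k i : ℚ) + 1) - (if σ k = i then (affinity σ k i : ℚ) else 0) := by
    intro i
    rw [affinity]
    split_ifs <;> push_cast <;> ring
  rw [Finset.sum_congr rfl (fun i _ => h i), Finset.sum_sub_distrib, Finset.sum_add_distrib]
  simp

theorem roundRobin_sum {N : ℕ} (σ : ℕ → Fin N) (hσ : ∀ t, (σ t : ℕ) = t % N) :
    ∀ k, k ≤ N → (∑ i : Fin N, (affinity σ k i : ℚ)) = (k + 1) * (2 * N - k) / 2 := by
  intro k
  induction k with
  | zero => intro _; simp [affinity]
  | succ k ih =>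
    intro hk
    have h : affinity σ k (σ k) = k + 1 := by
      apply affinity_of_unassigned
      intro j hj he
      have h1 := congrArg Fin.val he
      rw [hσ, hσ, Nat.mod_eq_of_lt (by omega), Nat.mod_eq_of_lt (by omega)] at h1
      omega
    rw [affinity_sum_succ, ih (by omega), h]
    push_cast
    ring

theorem roundRobin_AP_neg {N : ℕ} (hN : 2 ≤ N) (σ : ℕ → Fin N)
    (hσ : ∀ t, (σ t : ℕ) = t % N) :
    ∀ k, k < N - 1 → AP σ k < 0 := by
  intro k hk
  have hk' : (k : ℚ) + 2 ≤ N := by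
    have : k + 2 ≤ N := by omega
    exact_mod_cast this
  have hN0 : (0 : ℚ) < N := by
    have : 0 < N := by omega
    exact_mod_cast this
  rw [AP, roundRobin_sum σ hσ k (by omega), sub_neg, div_lt_iff₀ hN0]
  have h : (0 : ℚ) < (N - k) * (N - k - 1) := mul_pos (by linarith) (by linarith)
  linarith
end

section
/- Consider the affinity dynamics of a single task over N agents (N ≥ 1) with the round-robin assignment sequence σ t = t mod N. Then for every cycle k ≥ N − 1, the affinity pressure is zero: AP k = 0; in particular ∑ i, a k i = N (N + 1) / 2. -/
theorem aff_early {N : ℕ} (σ : ℕ → Fin N) (hσ : ∀ t, (σ t : ℕ) = t % N) :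
    ∀ k, k < N → ∀ i : Fin N, affinity σ k i = if (i : ℕ) < k then k - i else k + 1 := by
  intro k
  induction k with
  | zero => intro _ i; simp [affinity]
  | succ k ih =>
    intro hk i
    have h := hσ k
    rw [Nat.mod_eq_of_lt (by omega)] at h
    rw [affinity, ih (by omega) i]
    simp only [Fin.ext_iff, h]
    split_ifs <;> omega

theorem mod_step (N m : ℕ) (hN : 1 ≤ N) :
    (m + 1) % N = if m % N + 1 = N then 0 else m % N + 1 := by
  have h1 := Nat.mod_lt m hN
  have h2 : (m + 1) % N = (m % N + 1) % N := by simp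
  rw [h2]
  split_ifs with h
  · rw [h, Nat.mod_self]
  · exact Nat.mod_eq_of_lt (by omega)

theorem last_iff (N k i : ℕ) (hi : i < N) :
    ((k + (N - 1 - i)) % N + 1 = N) ↔ k % N = i := by
  have h1 := Nat.mod_lt k (by omega : 0 < N)
  have h2 : (k + (N - 1 - i)) % N = (k % N + (N - 1 - i)) % N := by simp
  rw [h2]
  by_cases h : k % N + (N - 1 - i) < N
  · rw [Nat.mod_eq_of_lt h]; omega
  · rw [Nat.mod_eq_sub_mod (by omega), Nat.mod_eq_of_lt (by omega)]; omega

theorem aff_late {N : ℕ} (hN : 1 ≤ N) (σ : ℕ → Fin N) (hσ : ∀ t, (σ t : ℕ) = t % N) :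
    ∀ k, N - 1 ≤ k → ∀ i : Fin N, affinity σ k i = (k + (N - 1 - i)) % N + 1 := by
  intro k hk
  induction k, hk using Nat.le_induction with
  | base =>
    intro i
    have hi := i.2
    rw [aff_early σ hσ _ (by omega) i]
    split_ifs with h
    · rw [Nat.mod_eq_sub_mod (by omega), Nat.mod_eq_of_lt (by omega)]; omega
    · rw [Nat.mod_eq_of_lt (by omega)]; omega
  | succ k hk ih =>
    intro i
    have e : k + 1 + (N - 1 - (i : ℕ)) = k + (N - 1 - i) + 1 := by omega
    rw [affinity, ih i, e, mod_step N _ hN]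
    simp only [Fin.ext_iff, hσ, last_iff N k i i.2]
    split_ifs <;> rfl

theorem sum_aux {N : ℕ} (hN : 1 ≤ N) (σ : ℕ → Fin N) (hσ : ∀ t, (σ t : ℕ) = t % N) :
    ∀ k, N - 1 ≤ k → (∑ i : Fin N, affinity σ k i) * 2 = N * (N + 1) := by
  intro k hk
  induction k, hk using Nat.le_induction with
  | base =>
    obtain ⟨n, rfl⟩ : ∃ n, N = n + 1 := ⟨N - 1, by omega⟩
    simp only [Nat.add_sub_cancel]
    rw [Finset.sum_congr rfl (fun i _ => aff_early σ hσ n (by omega) i), Fin.sum_univ_castSucc]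
    simp only [Fin.val_castSucc, Fin.is_lt, if_true, Fin.val_last, lt_irrefl, if_false]
    rw [Fin.sum_univ_eq_sum_range (fun i => n - i) n]
    have h : ∀ n : ℕ, (∑ i ∈ Finset.range n, (n - i)) * 2 = n * (n + 1) := by
      intro n
      induction n with
      | zero => simp
      | succ n ih =>
        rw [Finset.sum_range_succ']
        simp only [Nat.add_sub_add_right, Nat.sub_zero]
        linarith
    have := h n
    linarith
  | succ k hk ih =>
    rw [← ih]
    congr 1
    have h1 : affinity σ k (σ k) = N := by
      rw [aff_late hN σ hσ k hk, last_iff N k _ (σ k).2, hσ]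
    have h2 : ∀ i, affinity σ (k + 1) i + (if σ k = i then N else 0) = affinity σ k i + 1 := by
      intro i
      rw [affinity]
      split_ifs with h
      · subst h; omega
      · rfl
    have h3 := Finset.sum_congr (rfl : (Finset.univ : Finset (Fin N)) = _) (fun i _ => h2 i)
    simp [Finset.sum_add_distrib] at h3
    exact h3

theorem roundRobin_AP_eq_zero {N : ℕ} (hN : 1 ≤ N) (σ : ℕ → Fin N)
    (hσ : ∀ t, (σ t : ℕ) = t % N) :
    ∀ k, N - 1 ≤ k →
      AP σ k = 0 ∧ ∑ i : Fin N, affinity σ k i = N * (N + 1) / 2 := by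
  intro k hk
  have h := sum_aux hN σ hσ k hk
  refine ⟨?_, by omega⟩
  have hq : (∑ i : Fin N, (affinity σ k i : ℚ)) * 2 = N * (N + 1) := by exact_mod_cast h
  have hN0 : (N : ℚ) ≠ 0 := by positivity
  unfold AP
  field_simp
  linarith
end

section
/- Let N ≥ 1 and consider the affinity dynamics of a single task over N agents with a greedy (max-affinity) assignment sequence σ. Then for every cycle k ≥ N − 1, the agent chosen at cycle k has affinity exactly N: a k (σ k) = N. -/
theorem card_lt_affinity {N : ℕ} (σ : ℕ → Fin N) (hσ : Greedy σ) (k : ℕ) :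
    ∀ m, (Finset.univ.filter (fun i => m < affinity σ k i)).card =
      if m ≤ k then N - m else 0 := by
  induction k with
  | zero =>
    intro m
    rcases m with _ | m <;> simp [affinity]
  | succ k ih =>
    intro m
    rcases m with _ | m
    · have h : ∀ i, 0 < affinity σ (k + 1) i := by
        intro i
        simp only [affinity]
        split_ifs <;> omega
      simp [h]
    · have h : (Finset.univ.filter (fun i => m + 1 < affinity σ (k + 1) i)) =
          (Finset.univ.filter (fun i => m < affinity σ k i)).erase (σ k) := by
        ext i
        simp only [Finset.mem_filter, Finset.mem_univ, true_and, Finset.mem_erase]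
        by_cases hi : σ k = i
        · simp [affinity, hi]
        · simp [affinity, hi, Ne.symm hi]
      have h2 : (Finset.univ.filter (fun i => m + 1 < affinity σ (k + 1) i)).card =
          (Finset.univ.filter (fun i => m < affinity σ k i)).card - 1 := by
        rw [h]
        by_cases hm : m < affinity σ k (σ k)
        · exact Finset.card_erase_of_mem (by simpa using hm)
        · have : (Finset.univ.filter (fun i => m < affinity σ k i)) = ∅ := by
            ext i
            have := hσ k i
            simp
            omega
          simp [this]
      rw [h2, ih m]
      split_ifs <;> omega

theorem greedy_chosen_affinity_eq {N : ℕ} (hN : 1 ≤ N) (σ : ℕ → Fin N)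
    (hσ : Greedy σ) : ∀ k, N - 1 ≤ k → affinity σ k (σ k) = N := by
  intro k hk
  have h1 := card_lt_affinity σ hσ k (N - 1)
  have h2 := card_lt_affinity σ hσ k N
  have h2' : (Finset.univ.filter (fun i => N < affinity σ k i)).card = 0 := by
    rw [h2]
    split_ifs <;> omega
  rw [if_pos hk] at h1
  obtain ⟨i, hi⟩ := Finset.card_pos.mp
    (show 0 < (Finset.univ.filter (fun i => N - 1 < affinity σ k i)).card by omega)
  have hi2 : N - 1 < affinity σ k i := by simpa using hi
  have h3 := hσ k i
  have h4 : ¬ N < affinity σ k (σ k) := by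
    intro h
    have : σ k ∈ Finset.univ.filter (fun i => N < affinity σ k i) := by simpa using h
    rw [Finset.card_eq_zero.mp h2'] at this
    simp at this
  omega
end
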